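/- arXiv:2605.30493 — 3 statements merged into one kernel-verified Lean document; each statement's English description precedes it below -/
import Mathlib

section
/- (Proposition 1) Under the relaxed assumptions with parameters δ_m^1, δ_m^2, δ_e^1, δ_e^2 ≥ 0, the mean markup satisfies max{0, max_{j∈{1,2}} (E[θ̂^j/α^j] − δ_e^j·E[1/α^j] − δ_m^j)} ≤ E[μ] ≤ min_{j∈{1,2}} (E[θ̂^j/α^j] + δ_e^j·E[1/α^j] + δ_m^j). -/
open MeasureTheory

theorem abs_sub_div_le_of_abs_sub_le {K : Type*} [Field K] [LinearOrder K]
    [IsStrictOrderedRing K] {m a t t' δ ε : K} (ha : 0 ≤ a)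
    (hm : |m - t / a| ≤ δ) (ht : |t - t'| ≤ ε) : |m - t' / a| ≤ ε * (1 / a) + δ := by
  have scaled : |t / a - t' / a| ≤ ε * (1 / a) := by
    rw [← sub_div, abs_div, abs_of_nonneg ha, mul_one_div]
    exact div_le_div_of_nonneg_right ht ha
  calc |m - t' / a| ≤ |m - t / a| + |t / a - t' / a| := abs_sub_le _ _ _
    _ ≤ δ + ε * (1 / a) := add_le_add hm scaled
    _ = ε * (1 / a) + δ := add_comm _ _

section

variable {Ω : Type*} [MeasurableSpace Ω] {P : Measure Ω}

theorem norm_integral_sub_integral_le_of_norm_sub_le {E : Type*} [NormedAddCommGroup E]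
    [NormedSpace ℝ E] {f g : Ω → E} {h : Ω → ℝ} (hf : Integrable f P) (hg : Integrable g P)
    (hh : Integrable h P) (hfg : ∀ᵐ ω ∂P, ‖f ω - g ω‖ ≤ h ω) :
    ‖(∫ ω, f ω ∂P) - ∫ ω, g ω ∂P‖ ≤ ∫ ω, h ω ∂P := by
  rw [← integral_sub hf hg]
  exact norm_integral_le_of_norm_le hh hfg

theorem abs_integral_sub_integral_div_le [IsFiniteMeasure P] {μ α θ θhat : Ω → ℝ} {δm δe : ℝ}
    (hα : ∀ᵐ ω ∂P, 0 ≤ α ω) (hμθ : ∀ᵐ ω ∂P, |μ ω - θ ω / α ω| ≤ δm)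
    (hθ : ∀ᵐ ω ∂P, |θ ω - θhat ω| ≤ δe) (hμ : Integrable μ P)
    (hratio : Integrable (fun ω => θhat ω / α ω) P) (hinv : Integrable (fun ω => 1 / α ω) P) :
    |(∫ ω, μ ω ∂P) - ∫ ω, θhat ω / α ω ∂P| ≤ δe * (∫ ω, 1 / α ω ∂P) + δm * P.real Set.univ := by
  have pointwise : ∀ᵐ ω ∂P, |μ ω - θhat ω / α ω| ≤ δe * (1 / α ω) + δm := by
    filter_upwards [hα, hμθ, hθ] with ω hαω hμω hθω
    exact abs_sub_div_le_of_abs_sub_le hαω hμω hθω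
  have hscaled : Integrable (fun ω => δe * (1 / α ω)) P := hinv.const_mul δe
  have hconst : Integrable (fun _ : Ω => δm) P := integrable_const δm
  calc |(∫ ω, μ ω ∂P) - ∫ ω, θhat ω / α ω ∂P|
      ≤ ∫ ω, δe * (1 / α ω) + δm ∂P :=
        norm_integral_sub_integral_le_of_norm_sub_le hμ hratio (hscaled.add hconst) pointwise
    _ = δe * (∫ ω, 1 / α ω ∂P) + δm * P.real Set.univ := by
        rw [integral_add hscaled hconst, integral_const_mul, integral_const, smul_eq_mul,
          mul_comm (P.real Set.univ)]

end

/-- Proposition 1: partial identification of the average markup with two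
variable inputs, under the relaxed assumptions with parameters
`δ_m^j, δ_e^j ≥ 0`. -/
theorem stmt_1 {Ω : Type*} [MeasurableSpace Ω] (P : Measure Ω) [IsProbabilityMeasure P]
    (μ : Ω → ℝ) (α θhat : Fin 2 → Ω → ℝ) (δm δe : Fin 2 → ℝ)
    (hμmeas : Measurable μ) (hαmeas : ∀ j, Measurable (α j))
    (hθhatmeas : ∀ j, Measurable (θhat j))
    (hαpos : ∀ j, ∀ᵐ ω ∂P, 0 < α j ω)
    (hμnonneg : ∀ᵐ ω ∂P, 0 ≤ μ ω)
    (hδm : ∀ j, 0 ≤ δm j) (hδe : ∀ j, 0 ≤ δe j)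
    (hrelax : ∀ j, ∃ θ : Ω → ℝ, Measurable θ ∧
      (∀ᵐ ω ∂P, |μ ω - θ ω / α j ω| ≤ δm j) ∧
      (∀ᵐ ω ∂P, |θ ω - θhat j ω| ≤ δe j))
    (hμint : Integrable μ P)
    (hratioint : ∀ j, Integrable (fun ω => θhat j ω / α j ω) P)
    (hinvint : ∀ j, Integrable (fun ω => 1 / α j ω) P) :
    max 0 (max
        ((∫ ω, θhat 0 ω / α 0 ω ∂P) - δe 0 * (∫ ω, 1 / α 0 ω ∂P) - δm 0)
        ((∫ ω, θhat 1 ω / α 1 ω ∂P) - δe 1 * (∫ ω, 1 / α 1 ω ∂P) - δm 1))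
      ≤ ∫ ω, μ ω ∂P ∧
    (∫ ω, μ ω ∂P) ≤ min
        ((∫ ω, θhat 0 ω / α 0 ω ∂P) + δe 0 * (∫ ω, 1 / α 0 ω ∂P) + δm 0)
        ((∫ ω, θhat 1 ω / α 1 ω ∂P) + δe 1 * (∫ ω, 1 / α 1 ω ∂P) + δm 1) := by
  have bound (j : Fin 2) : |(∫ ω, μ ω ∂P) - ∫ ω, θhat j ω / α j ω ∂P| ≤
      δe j * (∫ ω, 1 / α j ω ∂P) + δm j := by
    obtain ⟨θ, -, hμθ, hθ⟩ := hrelax j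
    simpa only [probReal_univ, mul_one] using abs_integral_sub_integral_div_le
      ((hαpos j).mono fun _ h => h.le) hμθ hθ hμint (hratioint j) (hinvint j)
  have lower (j : Fin 2) : (∫ ω, θhat j ω / α j ω ∂P) - δe j * (∫ ω, 1 / α j ω ∂P) - δm j ≤
      ∫ ω, μ ω ∂P := by
    linarith [(abs_le.mp (bound j)).1]
  have upper (j : Fin 2) : (∫ ω, μ ω ∂P) ≤
      (∫ ω, θhat j ω / α j ω ∂P) + δe j * (∫ ω, 1 / α j ω ∂P) + δm j := by
    linarith [(abs_le.mp (bound j)).2]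
  exact ⟨max_le (integral_nonneg_of_ae hμnonneg) (max_le (lower 0) (lower 1)),
    le_min (upper 0) (upper 1)⟩
end

section
/- (Emptiness characterization underlying Proposition 2) Let m₁, m₂ ≥ 0 and s₁, s₂ > 0 be real numbers and δ_m, δ_e ≥ 0. The identified set I(δ_m, δ_e) is nonempty if and only if 2·δ_m + δ_e·(s₁ + s₂) ≥ |m₁ − m₂|; equivalently, the model is falsified exactly when δ_m < (|m₁ − m₂| − δ_e·(s₁ + s₂))/2. -/
/-!
The constraint of input `j` confines `x` to the closed interval with centre `mⱼ` and radius
`δₑ sⱼ + δₘ`. Two such intervals meet exactly when the distance between their centres is at most the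
sum of their radii, and the extra constraint `0 ≤ x` costs nothing: `0` lies below both centres,
hence below both right endpoints.
-/

section IntervalIntersection

variable {α : Type*} [AddCommGroup α] [LinearOrder α] [IsOrderedAddMonoid α] {a₁ a₂ r₁ r₂ c : α}

theorem max_sub_le_min_add_iff_abs_sub_le (hr₁ : 0 ≤ r₁) (hr₂ : 0 ≤ r₂) :
    max (a₁ - r₁) (a₂ - r₂) ≤ min (a₁ + r₁) (a₂ + r₂) ↔ |a₁ - a₂| ≤ r₁ + r₂ := by
  have self₁ : a₁ - r₁ ≤ a₁ + r₁ := (sub_le_self a₁ hr₁).trans (le_add_of_nonneg_right hr₁)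
  have self₂ : a₂ - r₂ ≤ a₂ + r₂ := (sub_le_self a₂ hr₂).trans (le_add_of_nonneg_right hr₂)
  have cross₁₂ : a₁ - r₁ ≤ a₂ + r₂ ↔ a₁ - a₂ ≤ r₁ + r₂ := by
    rw [sub_le_iff_le_add', sub_le_iff_le_add', add_left_comm]
  have cross₂₁ : a₂ - r₂ ≤ a₁ + r₁ ↔ a₂ - a₁ ≤ r₁ + r₂ := by
    rw [sub_le_iff_le_add', sub_le_iff_le_add', add_left_comm, add_comm r₂]
  simp only [max_le_iff, le_min_iff, self₁, self₂, cross₁₂, cross₂₁, abs_sub_le_iff, true_and,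
    and_true]
  exact and_comm

theorem Icc_max_max_sub_min_add_nonempty_iff (hr₁ : 0 ≤ r₁) (hr₂ : 0 ≤ r₂)
    (hc₁ : c ≤ a₁) (hc₂ : c ≤ a₂) :
    (Set.Icc (max (max c (a₁ - r₁)) (a₂ - r₂)) (min (a₁ + r₁) (a₂ + r₂))).Nonempty ↔
      |a₁ - a₂| ≤ r₁ + r₂ := by
  have hc : c ≤ min (a₁ + r₁) (a₂ + r₂) :=
    le_min (le_add_of_le_of_nonneg hc₁ hr₁) (le_add_of_le_of_nonneg hc₂ hr₂)
  rw [Set.nonempty_Icc, max_assoc, max_le_iff, and_iff_right hc,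
    max_sub_le_min_add_iff_abs_sub_le hr₁ hr₂]

end IntervalIntersection

/-- Emptiness characterization underlying Proposition 2: the two-input
identified set `I(δ_m, δ_e)` is nonempty iff `2·δ_m + δ_e·(s₁+s₂) ≥ |m₁ − m₂|`;
equivalently, the model is falsified exactly when
`δ_m < (|m₁ − m₂| − δ_e·(s₁+s₂))/2`. -/
theorem stmt_5 (m₁ m₂ s₁ s₂ δm δe : ℝ)
    (hm₁ : 0 ≤ m₁) (hm₂ : 0 ≤ m₂) (hs₁ : 0 < s₁) (hs₂ : 0 < s₂)
    (hδm : 0 ≤ δm) (hδe : 0 ≤ δe) :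
    ({x : ℝ | max (max 0 (m₁ - δe * s₁ - δm)) (m₂ - δe * s₂ - δm) ≤ x ∧
        x ≤ min (m₁ + δe * s₁ + δm) (m₂ + δe * s₂ + δm)}.Nonempty ↔
      2 * δm + δe * (s₁ + s₂) ≥ |m₁ - m₂|) ∧
    (¬ ({x : ℝ | max (max 0 (m₁ - δe * s₁ - δm)) (m₂ - δe * s₂ - δm) ≤ x ∧
        x ≤ min (m₁ + δe * s₁ + δm) (m₂ + δe * s₂ + δm)}.Nonempty) ↔
      δm < (|m₁ - m₂| - δe * (s₁ + s₂)) / 2) := by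
  have hr₁ : 0 ≤ δe * s₁ + δm := by positivity
  have hr₂ : 0 ≤ δe * s₂ + δm := by positivity
  have sum_radii : (δe * s₁ + δm) + (δe * s₂ + δm) = 2 * δm + δe * (s₁ + s₂) := by ring
  have nonempty_iff := Icc_max_max_sub_min_add_nonempty_iff hr₁ hr₂ hm₁ hm₂
  rw [sum_radii] at nonempty_iff
  simp only [← sub_sub, ← add_assoc] at nonempty_iff
  refine ⟨nonempty_iff, nonempty_iff.not.trans ?_⟩
  rw [not_le, lt_div_iff₀' two_pos, lt_sub_iff_add_lt]
end

section
/- (Proposition 2: falsification frontier) Let m₁, m₂ ≥ 0 and s₁, s₂ > 0 be real numbers. The set of nonnegative relaxation pairs at which the bounds exactly touch, {(δ_m, δ_e) ∈ ℝ≥0 × ℝ≥0 : max{0, LB₁, LB₂} = min{UB₁, UB₂}}, equals the line segment {(δ_m, δ_e) ∈ ℝ≥0 × ℝ≥0 : δ_m = (|m₁ − m₂| − δ_e·(s₁ + s₂))/2}. -/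
/-!
With radii `r_j = δ_e s_j + δ_m`, the model bounds describe the intervals `[m_j - r_j, m_j + r_j]`.
The floor `0` does not affect contact: if both `m_j - r_j` are negative, then `r_j > m_j ≥ 0`, so
both upper bounds are positive and there is no contact with or without the floor. Two intervals with
positive radii touch exactly when the distance of their centres is the sum of the radii. Since
`s_j > 0`, the two radii can only vanish simultaneously, so the case of a single point inside a
larger interval does not arise.
-/

section OrderedGroup

variable {G : Type*} [AddCommGroup G] [LinearOrder G] [IsOrderedAddMonoid G] {x y r s : G}

theorem max_sub_le_min_add_iff (hr : 0 ≤ r) (hs : 0 ≤ s) :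
    max (x - r) (y - s) ≤ min (x + r) (y + s) ↔ |x - y| ≤ r + s := by
  simp only [max_le_iff, le_min_iff, abs_le]
  grind

theorem max_sub_lt_min_add_iff :
    max (x - r) (y - s) < min (x + r) (y + s) ↔ 0 < r ∧ 0 < s ∧ |x - y| < r + s := by
  simp only [max_lt_iff, lt_min_iff, abs_lt]
  grind

theorem max_sub_eq_min_add_iff (hr : 0 ≤ r) (hs : 0 ≤ s) (hrs : r = 0 ↔ s = 0) :
    max (x - r) (y - s) = min (x + r) (y + s) ↔ |x - y| = r + s := by
  have radii_pos (h : |x - y| < r + s) : 0 < r ∧ 0 < s := by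
    have hsum : 0 < r + s := (abs_nonneg _).trans_lt h
    grind
  rw [eq_iff_le_not_lt, eq_iff_le_not_lt, max_sub_le_min_add_iff hr hs, max_sub_lt_min_add_iff]
  tauto

theorem max_zero_max_sub_eq_min_add_iff (hx : 0 ≤ x) (hy : 0 ≤ y) :
    max 0 (max (x - r) (y - s)) = min (x + r) (y + s) ↔
      max (x - r) (y - s) = min (x + r) (y + s) := by
  rcases le_or_gt 0 (max (x - r) (y - s)) with lower_nonneg | lower_neg
  · rw [max_eq_right lower_nonneg]
  · have upper_pos : 0 < min (x + r) (y + s) := by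
      obtain ⟨hxr, hys⟩ := max_lt_iff.mp lower_neg
      exact lt_min (add_pos_of_nonneg_of_pos hx (hx.trans_lt (sub_neg.mp hxr)))
        (add_pos_of_nonneg_of_pos hy (hy.trans_lt (sub_neg.mp hys)))
    rw [max_eq_left lower_neg.le]
    exact iff_of_false upper_pos.ne (lower_neg.trans upper_pos).ne

end OrderedGroup

theorem stmt_6_general {K : Type*} [Field K] [LinearOrder K] [IsStrictOrderedRing K]
    (m₁ m₂ s₁ s₂ : K) (hm₁ : 0 ≤ m₁) (hm₂ : 0 ≤ m₂) (hs₁ : 0 < s₁) (hs₂ : 0 < s₂) :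
    {p : K × K | 0 ≤ p.1 ∧ 0 ≤ p.2 ∧
        max (max 0 (m₁ - p.2 * s₁ - p.1)) (m₂ - p.2 * s₂ - p.1)
          = min (m₁ + p.2 * s₁ + p.1) (m₂ + p.2 * s₂ + p.1)}
      = {p : K × K | 0 ≤ p.1 ∧ 0 ≤ p.2 ∧
        p.1 = (|m₁ - m₂| - p.2 * (s₁ + s₂)) / 2} := by
  ext ⟨δ_m, δ_e⟩
  refine and_congr_right fun hδ_m => and_congr_right fun hδ_e => ?_
  dsimp only at hδ_m hδ_e ⊢
  have radius_nonneg {s : K} (hs : 0 < s) : 0 ≤ δ_e * s + δ_m := by positivity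
  have radius_eq_zero_iff {s : K} (hs : 0 < s) : δ_e * s + δ_m = 0 ↔ δ_e = 0 ∧ δ_m = 0 := by
    rw [add_eq_zero_iff_of_nonneg (by positivity) hδ_m, mul_eq_zero_iff_right hs.ne']
  have radii_vanish_together : δ_e * s₁ + δ_m = 0 ↔ δ_e * s₂ + δ_m = 0 := by
    rw [radius_eq_zero_iff hs₁, radius_eq_zero_iff hs₂]
  rw [max_assoc, sub_sub, sub_sub, add_assoc, add_assoc,
    max_zero_max_sub_eq_min_add_iff hm₁ hm₂,
    max_sub_eq_min_add_iff (radius_nonneg hs₁) (radius_nonneg hs₂) radii_vanish_together,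
    eq_div_iff two_ne_zero]
  constructor <;> intro h <;> linear_combination -h

/-- Proposition 2: the falsification frontier, i.e. the set of nonnegative
relaxation pairs `(δ_m, δ_e)` at which the maximal lower bound and minimal
upper bound exactly touch, is the line segment
`δ_m = (|m₁ − m₂| − δ_e·(s₁ + s₂))/2`. -/
theorem stmt_6 (m₁ m₂ s₁ s₂ : ℝ)
    (hm₁ : 0 ≤ m₁) (hm₂ : 0 ≤ m₂) (hs₁ : 0 < s₁) (hs₂ : 0 < s₂) :
    {p : ℝ × ℝ | 0 ≤ p.1 ∧ 0 ≤ p.2 ∧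
        max (max 0 (m₁ - p.2 * s₁ - p.1)) (m₂ - p.2 * s₂ - p.1)
          = min (m₁ + p.2 * s₁ + p.1) (m₂ + p.2 * s₂ + p.1)}
      = {p : ℝ × ℝ | 0 ≤ p.1 ∧ 0 ≤ p.2 ∧
        p.1 = (|m₁ - m₂| - p.2 * (s₁ + s₂)) / 2} :=
  stmt_6_general m₁ m₂ s₁ s₂ hm₁ hm₂ hs₁ hs₂
end
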